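/- arXiv:2010.04662 — 3 statements merged into one kernel-verified Lean document; each statement's English description precedes it below -/
import Mathlib

section
/- Let K be a field, s ∈ ℤ^n, and let P ∈ K[x]^{m×n} be in s-reduced form with t = rdeg_s(P) ∈ ℤ^m. Then for every M ∈ K[x]^{k×m}, lm_s(MP) = lm_t(M) · lm_s(P). -/
open Polynomial Matrix

/-- The degree of a polynomial, viewed in `ℤ ∪ {-∞}`. -/
noncomputable def degZ {K : Type*} [Field K] (p : K[X]) : WithBot ℤ :=
  p.degree.map fun a : ℕ => (a : ℤ)

/-- The `s`-row degree of a (row) vector of polynomials. -/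
noncomputable def rdegRow {K : Type*} [Field K] {ν : Type*} [Fintype ν]
    (s : ν → ℤ) (v : ν → K[X]) : WithBot ℤ :=
  Finset.univ.sup fun j => degZ (v j) + (s j : WithBot ℤ)

/-- The `s`-row degree of a polynomial matrix. -/
noncomputable def rdeg {K : Type*} [Field K] {ι ν : Type*} [Fintype ν]
    (s : ν → ℤ) (P : Matrix ι ν K[X]) : ι → WithBot ℤ :=
  fun i => rdegRow s (P i)

/-- The `t`-column degree of a polynomial matrix. -/
noncomputable def cdeg {K : Type*} [Field K] {ι ν : Type*} [Fintype ι]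
    (t : ι → ℤ) (P : Matrix ι ν K[X]) : ν → WithBot ℤ :=
  fun j => Finset.univ.sup fun i => degZ (P i j) + (t i : WithBot ℤ)

/-- Coefficient of integer degree `d` of a polynomial (0 if `d < 0`). -/
noncomputable def coeffZ {K : Type*} [Field K] (p : K[X]) (d : ℤ) : K :=
  if 0 ≤ d then p.coeff d.toNat else 0

/-- The `s`-leading matrix of a polynomial matrix. -/
noncomputable def lm {K : Type*} [Field K] {ι ν : Type*} [Fintype ν]
    (s : ν → ℤ) (P : Matrix ι ν K[X]) : Matrix ι ν K :=
  Matrix.of fun i j =>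
    (rdeg s P i).recBotCoe 0 fun t => coeffZ (P i j) (t - s j)

/-- `P` is in `s`-reduced form: its `s`-leading matrix has full row rank,
i.e. its rows are linearly independent over `K`. -/
def IsReducedForm {K : Type*} [Field K] {ι ν : Type*} [Fintype ν]
    (s : ν → ℤ) (P : Matrix ι ν K[X]) : Prop :=
  LinearIndependent K fun i => lm s P i

open Classical in
/-- The `s`-pivot index of a row vector: the largest column index where the
`s`-row degree is attained (with a nonzero entry); `⊥` for the zero row. -/
noncomputable def piv {K : Type*} [Field K] {ν : Type*} [Fintype ν] [LinearOrder ν]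
    (s : ν → ℤ) (v : ν → K[X]) : WithBot ν :=
  (Finset.univ.filter fun j => v j ≠ 0 ∧ degZ (v j) + (s j : WithBot ℤ) = rdegRow s v).max

/-- The `s`-pivot degree of a row vector (junk value `0` for the zero row). -/
noncomputable def pivDeg {K : Type*} [Field K] {ν : Type*} [Fintype ν] [LinearOrder ν]
    (s : ν → ℤ) (v : ν → K[X]) : ℕ :=
  ((piv s v).map fun j => (v j).natDegree).unbotD 0

/-- `P` is in `s`-weak Popov form: no zero row and strictly increasing `s`-pivot indices. -/
def IsWeakPopov {K : Type*} [Field K] {ι ν : Type*} [Fintype ν] [LinearOrder ν] [Preorder ι]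
    (s : ν → ℤ) (P : Matrix ι ν K[X]) : Prop :=
  (∀ i, piv s (P i) ≠ ⊥) ∧ StrictMono fun i => piv s (P i)

/-- `P` is in `s`-unordered weak Popov form: no zero row and pairwise distinct
`s`-pivot indices. -/
def IsUWeakPopov {K : Type*} [Field K] {ι ν : Type*} [Fintype ν] [LinearOrder ν]
    (s : ν → ℤ) (P : Matrix ι ν K[X]) : Prop :=
  (∀ i, piv s (P i) ≠ ⊥) ∧ Function.Injective fun i => piv s (P i)

/-- `P` is in `s`-Popov form: `s`-weak Popov, monic pivots, and each pivot entry
has degree strictly larger than the other entries of its column. -/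
def IsPopov {K : Type*} [Field K] {ι ν : Type*} [Fintype ν] [LinearOrder ν] [Preorder ι]
    (s : ν → ℤ) (P : Matrix ι ν K[X]) : Prop :=
  IsWeakPopov s P ∧
    ∀ i (j : ν), piv s (P i) = (j : WithBot ν) →
      (P i j).Monic ∧ ∀ i', i' ≠ i → (P i' j).degree < (P i j).degree

/-- The row space of a polynomial matrix. -/
noncomputable def rowSpace {K : Type*} [Field K] {ι ν : Type*} (P : Matrix ι ν K[X]) :
    Submodule K[X] (ν → K[X]) :=
  Submodule.span K[X] (Set.range fun i => P i)

/-- The rows of `B` form a basis of the module `M`. -/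
def IsBasisOf {K : Type*} [Field K] {ι ν : Type*} (B : Matrix ι ν K[X])
    (M : Submodule K[X] (ν → K[X])) : Prop :=
  LinearIndependent K[X] (fun i => B i) ∧
    Submodule.span K[X] (Set.range fun i => B i) = M

/-- The left kernel of a polynomial matrix. -/
noncomputable def leftKernel {K : Type*} [Field K] {ι ν : Type*} [Fintype ι]
    (F : Matrix ι ν K[X]) : Submodule K[X] (ι → K[X]) :=
  LinearMap.ker F.vecMulLinear

/-!
Give the `i`-th unit vector of `K[x]^m` the degree `t i`. Since `t` bounds the row degrees of `P`,
the map `v ↦ v P` does not increase degrees, and on components of degree `d` it is multiplication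
by the constant matrix `lm_s(P)`. When `P` is reduced this matrix has independent rows, so the
leading component of `v` is not killed and `v P` has exactly the degree of `v` (the predictable
degree property). Hence the leading row of `v P` is the leading row of `v` times `lm_s(P)`; apply
this to each row of `M`.
-/

section

variable {K : Type*} [Field K] {κ ι ν : Type*}

theorem degZ_zero : degZ (0 : K[X]) = ⊥ := by
  rw [degZ, degree_zero, WithBot.map_bot]

theorem degZ_eq_natDegree {p : K[X]} (hp : p ≠ 0) :
    degZ p = ((p.natDegree : ℤ) : WithBot ℤ) := by
  rw [degZ, degree_eq_natDegree hp]
  rfl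

theorem degZ_mul (p q : K[X]) : degZ (p * q) = degZ p + degZ q := by
  rw [degZ, degree_mul]
  exact WithBot.map_add (Nat.castAddMonoidHom ℤ) _ _

theorem degZ_sum_le (S : Finset ι) (f : ι → K[X]) :
    degZ (∑ i ∈ S, f i) ≤ S.sup fun i => degZ (f i) := by
  have hmono : Monotone (WithBot.map fun a : ℕ => (a : ℤ)) := Nat.mono_cast.withBot_map
  exact (hmono (degree_sum_le S f)).trans_eq
    (Finset.apply_sup_eq_sup_comp_of_linearOrder _ hmono (WithBot.map_bot _))

theorem coeffZ_zero (d : ℤ) : coeffZ (0 : K[X]) d = 0 := by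
  simp [coeffZ]

theorem coeffZ_natCast (p : K[X]) (n : ℕ) : coeffZ p n = p.coeff n := by
  simp [coeffZ]

theorem coeffZ_sum (S : Finset ι) (f : ι → K[X]) (d : ℤ) :
    coeffZ (∑ i ∈ S, f i) d = ∑ i ∈ S, coeffZ (f i) d := by
  unfold coeffZ
  split_ifs <;> simp [finsetSum_coeff]

theorem exists_natCast_eq_of_degZ_le {p : K[X]} (hp : p ≠ 0) {a : ℤ} (h : degZ p ≤ a) :
    ∃ n : ℕ, (n : ℤ) = a ∧ p.natDegree ≤ n := by
  rw [degZ_eq_natDegree hp, WithBot.coe_le_coe] at h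
  lift a to ℕ using (Int.natCast_nonneg _).trans h
  exact ⟨a, rfl, Int.ofNat_le.mp h⟩

theorem coeffZ_eq_zero_iff_degZ_lt {p : K[X]} {a : ℤ} (h : degZ p ≤ a) :
    coeffZ p a = 0 ↔ degZ p < a := by
  rcases eq_or_ne p 0 with rfl | hp
  · simp [coeffZ_zero, degZ_zero]
  obtain ⟨n, rfl, hn⟩ := exists_natCast_eq_of_degZ_le hp h
  rw [coeffZ_natCast, degZ_eq_natDegree hp, WithBot.coe_lt_coe, Nat.cast_lt]
  refine ⟨fun h0 => hn.lt_of_ne ?_, coeff_eq_zero_of_natDegree_lt⟩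
  rintro rfl
  exact hp (leadingCoeff_eq_zero.mp h0)

theorem coeffZ_mul_add_of_degZ_le {p q : K[X]} {a b : ℤ} (hp : degZ p ≤ a) (hq : degZ q ≤ b) :
    coeffZ (p * q) (a + b) = coeffZ p a * coeffZ q b := by
  rcases eq_or_ne p 0 with rfl | hp0
  · simp only [zero_mul, coeffZ_zero]
  rcases eq_or_ne q 0 with rfl | hq0
  · simp only [mul_zero, coeffZ_zero]
  obtain ⟨m, rfl, hm⟩ := exists_natCast_eq_of_degZ_le hp0 hp
  obtain ⟨n, rfl, hn⟩ := exists_natCast_eq_of_degZ_le hq0 hq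
  rw [← Nat.cast_add]
  simp only [coeffZ_natCast]
  exact coeff_mul_add_eq_of_natDegree_le hm hn

/-- The homogeneous component of shifted degree `d` of a row vector, when the `j`-th unit vector is
given degree `s j`. At `d = rdegRow s v` it is the `s`-leading row of `v`. -/
noncomputable def rowCoeff (s : ν → ℤ) (v : ν → K[X]) (d : ℤ) : ν → K :=
  fun j => coeffZ (v j) (d - s j)

section

variable [Fintype ν] {s : ν → ℤ}

theorem rdegRow_le_coe_iff {v : ν → K[X]} {d : ℤ} :
    rdegRow s v ≤ d ↔ ∀ j, degZ (v j) ≤ ((d - s j : ℤ) : WithBot ℤ) := by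
  simp only [rdegRow, Finset.sup_le_iff, Finset.mem_univ, true_imp_iff]
  refine forall_congr' fun j => ?_
  rw [← WithBot.add_le_add_iff_right (x := degZ (v j)) (WithBot.coe_ne_bot (a := s j)),
    ← WithBot.coe_add, sub_add_cancel]

theorem rdegRow_lt_coe_iff {v : ν → K[X]} {d : ℤ} :
    rdegRow s v < d ↔ ∀ j, degZ (v j) < ((d - s j : ℤ) : WithBot ℤ) := by
  simp only [rdegRow, Finset.sup_lt_iff (WithBot.bot_lt_coe d), Finset.mem_univ, true_imp_iff]
  refine forall_congr' fun j => ?_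
  rw [← WithBot.add_lt_add_iff_right (x := degZ (v j)) (WithBot.coe_ne_bot (a := s j)),
    ← WithBot.coe_add, sub_add_cancel]

theorem rowCoeff_eq_zero_iff_rdegRow_lt {v : ν → K[X]} {d : ℤ} (h : rdegRow s v ≤ d) :
    rowCoeff s v d = 0 ↔ rdegRow s v < d := by
  rw [rdegRow_lt_coe_iff, funext_iff]
  exact forall_congr' fun j => coeffZ_eq_zero_iff_degZ_lt (rdegRow_le_coe_iff.mp h j)

theorem lm_row_of_rdeg_eq_bot {P : Matrix ι ν K[X]} {i : ι} (h : rdeg s P i = ⊥) :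
    lm s P i = 0 := by
  ext j
  simp [lm, h]

theorem lm_row_of_rdeg_eq_coe {P : Matrix ι ν K[X]} {i : ι} {d : ℤ} (h : rdeg s P i = d) :
    lm s P i = rowCoeff s (P i) d := by
  ext j
  simp [lm, h, rowCoeff]

variable [Fintype ι] {t : ι → ℤ} {P : Matrix ι ν K[X]}

theorem rdegRow_vecMul_le (hP : ∀ i, rdeg s P i ≤ t i) (v : ι → K[X]) :
    rdegRow s (v ᵥ* P) ≤ rdegRow t v := by
  refine WithBot.forall_le_coe_iff_le.mp fun d hv => rdegRow_le_coe_iff.mpr fun j => ?_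
  refine (degZ_sum_le _ _).trans (Finset.sup_le fun i _ => ?_)
  calc degZ (v i * P i j) = degZ (v i) + degZ (P i j) := degZ_mul _ _
    _ ≤ ((d - t i : ℤ) : WithBot ℤ) + ((t i - s j : ℤ) : WithBot ℤ) :=
      add_le_add (rdegRow_le_coe_iff.mp hv i) (rdegRow_le_coe_iff.mp (hP i) j)
    _ = ((d - s j : ℤ) : WithBot ℤ) := by rw [← WithBot.coe_add, sub_add_sub_cancel]

theorem rowCoeff_vecMul (hP : ∀ i, rdeg s P i ≤ t i) {v : ι → K[X]} {d : ℤ}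
    (hv : rdegRow t v ≤ d) :
    rowCoeff s (v ᵥ* P) d = rowCoeff t v d ᵥ* Matrix.of fun i => rowCoeff s (P i) (t i) := by
  ext j
  calc coeffZ (∑ i, v i * P i j) (d - s j)
      = ∑ i, coeffZ (v i * P i j) ((d - t i) + (t i - s j)) := by
        simp only [coeffZ_sum, sub_add_sub_cancel]
    _ = ∑ i, coeffZ (v i) (d - t i) * coeffZ (P i j) (t i - s j) :=
        Finset.sum_congr rfl fun i _ => coeffZ_mul_add_of_degZ_le
          (rdegRow_le_coe_iff.mp hv i) (rdegRow_le_coe_iff.mp (hP i) j)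

theorem rowCoeff_vecMul_eq_vecMul_lm (hP : ∀ i, rdeg s P i = t i) {v : ι → K[X]} {d : ℤ}
    (hv : rdegRow t v ≤ d) :
    rowCoeff s (v ᵥ* P) d = rowCoeff t v d ᵥ* lm s P := by
  have hlm : lm s P = Matrix.of fun i => rowCoeff s (P i) (t i) :=
    funext fun i => lm_row_of_rdeg_eq_coe (hP i)
  rw [hlm, rowCoeff_vecMul (fun i => (hP i).le) hv]

theorem IsReducedForm.rdegRow_vecMul (hred : IsReducedForm s P) (hP : ∀ i, rdeg s P i = t i)
    (v : ι → K[X]) : rdegRow s (v ᵥ* P) = rdegRow t v := by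
  have hle : rdegRow s (v ᵥ* P) ≤ rdegRow t v := rdegRow_vecMul_le (fun i => (hP i).le) v
  cases hv : rdegRow t v with
  | bot => exact le_bot_iff.mp (hle.trans_eq hv)
  | coe d =>
    rw [hv] at hle
    refine eq_of_le_of_not_lt hle fun hlt => ?_
    have hker : rowCoeff t v d ᵥ* lm s P = 0 := by
      rw [← rowCoeff_vecMul_eq_vecMul_lm hP hv.le, rowCoeff_eq_zero_iff_rdegRow_lt hle]
      exact hlt
    have hzero : rowCoeff t v d = 0 :=
      Matrix.vecMul_injective_iff.mpr hred (hker.trans (zero_vecMul _).symm)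
    exact ((rowCoeff_eq_zero_iff_rdegRow_lt hv.le).mp hzero).ne hv

theorem lm_mul_general (hred : IsReducedForm s P) (hP : ∀ i, rdeg s P i = t i)
    (M : Matrix κ ι K[X]) : lm s (M * P) = lm t M * lm s P := by
  funext i
  have hdeg : rdeg s (M * P) i = rdeg t M i := hred.rdegRow_vecMul hP (M i)
  rw [mul_apply_eq_vecMul]
  cases hM : rdeg t M i with
  | bot =>
    rw [lm_row_of_rdeg_eq_bot hM, lm_row_of_rdeg_eq_bot (hdeg.trans hM), zero_vecMul]
  | coe d =>
    rw [lm_row_of_rdeg_eq_coe hM, lm_row_of_rdeg_eq_coe (hdeg.trans hM), mul_apply_eq_vecMul,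
      rowCoeff_vecMul_eq_vecMul_lm hP hM.le]

end

end

/-- Lemma on products of leading matrices:
if `P` is `s`-reduced with integer `s`-row degree `t`, then for every `M`,
`lm_s(M·P) = lm_t(M) · lm_s(P)`. -/
theorem lm_mul {K : Type*} [Field K] {k m n : ℕ}
    (s : Fin n → ℤ) (P : Matrix (Fin m) (Fin n) K[X])
    (hred : IsReducedForm s P)
    (t : Fin m → ℤ) (ht : ∀ i, rdeg s P i = ((t i : ℤ) : WithBot ℤ))
    (M : Matrix (Fin k) (Fin m) K[X]) :
    lm s (M * P) = lm t M * lm s P :=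
  lm_mul_general hred ht M
end

section
/- Let K be a field, v ∈ ℤ^n, and let K ∈ K[x]^{n×n} have no zero row, so that d = rdeg_v(K) ∈ ℤ^n. (a) If lm_v(K) has no zero column, then lm_{−d}(K^T) = (lm_v(K))^T and rdeg_{−d}(K^T) = −v. (b) If K is in v-reduced form, then K^T is in −d-reduced form. -/
open Polynomial Matrix

/-! Both `rdeg v M i ≤ d i` for all `i` and `rdeg (-d) Mᵀ j ≤ -v j` for all `j` say that
`deg (M i j) ≤ d i - v j` for all `i` and `j`. A nonzero entry in every column of `lm v M` makes the
second family of bounds an equality, and then `lm v M i j` and `lm (-d) Mᵀ j i` are the same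
coefficient of `M i j`, the one of degree `d i - v j = -v j - (-d i)`. Linearly independent
columns are nonzero, so (b) reduces to (a). -/

section

variable {K : Type*} [Field K] {ι ν : Type*}

theorem coe_le_degZ_of_coeffZ_ne_zero {p : K[X]} {k : ℤ} (h : coeffZ p k ≠ 0) :
    (k : WithBot ℤ) ≤ degZ p := by
  have hk : 0 ≤ k := by
    by_contra hk
    exact h (if_neg hk)
  lift k to ℕ using hk
  have hcoeff : p.coeff k ≠ 0 := by simpa [coeffZ] using h
  exact (WithBot.map_le_iff (x := (k : WithBot ℕ)) _ Nat.cast_le).2 (le_degree_of_ne_zero hcoeff)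

section

variable [Fintype ν] {s : ν → ℤ} {P : Matrix ι ν K[X]} {i : ι} {t : ℤ}

theorem degZ_add_le_rdeg (s : ν → ℤ) (P : Matrix ι ν K[X]) (i : ι) (j : ν) :
    degZ (P i j) + (s j : WithBot ℤ) ≤ rdeg s P i :=
  Finset.le_sup (f := fun j => degZ (P i j) + (s j : WithBot ℤ)) (Finset.mem_univ j)

theorem rdeg_le_coe_iff :
    rdeg s P i ≤ (t : WithBot ℤ) ↔ ∀ j, degZ (P i j) ≤ ((t - s j : ℤ) : WithBot ℤ) := by
  simp only [rdeg, rdegRow, Finset.sup_le_iff, Finset.mem_univ, true_imp_iff]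
  refine forall_congr' fun j => ?_
  cases degZ (P i j) with
  | bot => simp
  | coe a =>
    norm_cast
    exact le_sub_iff_add_le.symm

theorem coe_le_rdeg_of_coeffZ_ne_zero {j : ν} (h : coeffZ (P i j) (t - s j) ≠ 0) :
    (t : WithBot ℤ) ≤ rdeg s P i :=
  calc (t : WithBot ℤ) = ((t - s j : ℤ) : WithBot ℤ) + (s j : WithBot ℤ) := by
        rw [← WithBot.coe_add, sub_add_cancel]
    _ ≤ degZ (P i j) + (s j : WithBot ℤ) := by
        gcongr
        exact coe_le_degZ_of_coeffZ_ne_zero h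
    _ ≤ rdeg s P i := degZ_add_le_rdeg s P i j

theorem lm_apply_of_rdeg_eq (h : rdeg s P i = (t : WithBot ℤ)) (j : ν) :
    lm s P i j = coeffZ (P i j) (t - s j) := by
  simp only [lm, of_apply, h, WithBot.recBotCoe_coe]

end

variable [Fintype ι] [Fintype ν] {v : ν → ℤ} {d : ι → ℤ} {M : Matrix ι ν K[X]}

theorem forall_rdeg_transpose_le_iff :
    (∀ j, rdeg (-d) Mᵀ j ≤ ((-v j : ℤ) : WithBot ℤ)) ↔
      ∀ i, rdeg v M i ≤ (d i : WithBot ℤ) := by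
  simp only [rdeg_le_coe_iff, transpose_apply, Pi.neg_apply, neg_sub_neg]
  exact forall_comm

theorem rdeg_transpose (hd : ∀ i, rdeg v M i = (d i : WithBot ℤ))
    (hcol : ∀ j, ∃ i, lm v M i j ≠ 0) (j : ν) :
    rdeg (-d) Mᵀ j = ((-v j : ℤ) : WithBot ℤ) := by
  refine (forall_rdeg_transpose_le_iff.2 (fun i => (hd i).le) j).antisymm ?_
  obtain ⟨i, hi⟩ := hcol j
  rw [lm_apply_of_rdeg_eq (hd i)] at hi
  apply coe_le_rdeg_of_coeffZ_ne_zero (j := i)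
  rwa [transpose_apply, Pi.neg_apply, neg_sub_neg]

theorem lm_transpose (hd : ∀ i, rdeg v M i = (d i : WithBot ℤ))
    (hcol : ∀ j, ∃ i, lm v M i j ≠ 0) :
    lm (-d) Mᵀ = (lm v M)ᵀ := by
  ext j i
  rw [lm_apply_of_rdeg_eq (rdeg_transpose hd hcol j), transpose_apply, transpose_apply,
    lm_apply_of_rdeg_eq (hd i), Pi.neg_apply, neg_sub_neg]

theorem isReducedForm_transpose (hd : ∀ i, rdeg v M i = (d i : WithBot ℤ))
    (hli : LinearIndependent K (lm v M).col) :
    IsReducedForm (-d) Mᵀ := by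
  have hcol : ∀ j, ∃ i, lm v M i j ≠ 0 := fun j => Function.ne_iff.1 (hli.ne_zero j)
  rw [IsReducedForm, lm_transpose hd hcol]
  exact hli

end

theorem transpose_reduced_general {K : Type*} [Field K] {ι ν : Type*} [Fintype ι] [Fintype ν]
    (v : ν → ℤ) (M : Matrix ι ν K[X]) (d : ι → ℤ) (hd : ∀ i, rdeg v M i = (d i : WithBot ℤ)) :
    ((∀ j, ∃ i, lm v M i j ≠ 0) →
      lm (-d) Mᵀ = (lm v M)ᵀ ∧ ∀ j, rdeg (-d) Mᵀ j = ((-v j : ℤ) : WithBot ℤ)) ∧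
    (LinearIndependent K (lm v M).col → IsReducedForm (-d) Mᵀ) :=
  ⟨fun hcol => ⟨lm_transpose hd hcol, rdeg_transpose hd hcol⟩, isReducedForm_transpose hd⟩

/-- Lemma 3.2 (a),(b): for `M` with no zero row and
`d = rdeg_v(M) ∈ ℤ^n`: (a) if `lm_v(M)` has no zero column then
`lm_{−d}(Mᵀ) = (lm_v(M))ᵀ` and `rdeg_{−d}(Mᵀ) = −v`; (b) if `M` is
`v`-reduced then `Mᵀ` is `(−d)`-reduced. -/
theorem transpose_reduced {K : Type*} [Field K] {n : ℕ}
    (v : Fin n → ℤ) (M : Matrix (Fin n) (Fin n) K[X])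
    (hnz : ∀ i, ∃ j, M i j ≠ 0)
    (d : Fin n → ℤ) (hd : ∀ i, rdeg v M i = ((d i : ℤ) : WithBot ℤ)) :
    ((∀ j, ∃ i, lm v M i j ≠ 0) →
      lm (fun i => -d i) Mᵀ = (lm v M)ᵀ ∧
        ∀ i, rdeg (fun i' => -d i') Mᵀ i = ((-v i : ℤ) : WithBot ℤ)) ∧
    (IsReducedForm v M → IsReducedForm (fun i => -d i) Mᵀ) := by
  refine (transpose_reduced_general v M d hd).imp_right fun hcols hrows => hcols ?_
  exact linearIndependent_cols_iff_isUnit.2 (linearIndependent_rows_iff_isUnit.1 hrows)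
end

section
/- Let K be a field, 1 ≤ k < m, and let P ∈ K[x]^{m×m} be partitioned in blocks as P = [[P1, P2],[P3, P4]] with P1 ∈ K[x]^{k×k} and P4 ∈ K[x]^{(m−k)×(m−k)}. Let K1 ∈ K[x]^{(m−k)×k} and K2 ∈ K[x]^{(m−k)×(m−k)} satisfy K1·P1 + K2·P3 = 0. Then det(K2) · det(P) = det(P1) · det(K1·P2 + K2·P4). -/
open Polynomial Matrix

section BlockDeterminant

variable {R m n : Type*} [CommRing R] [Fintype m] [DecidableEq m] [Fintype n] [DecidableEq n]

theorem det_mul_det_fromBlocks_eq_det_fromBlocks_add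
    (A : Matrix m m R) (B : Matrix m n R) (C : Matrix n m R) (D : Matrix n n R)
    (X : Matrix n m R) (Y : Matrix n n R) :
    Y.det * (fromBlocks A B C D).det =
      (fromBlocks A B (X * A + Y * C) (X * B + Y * D)).det :=
  calc
    Y.det * (fromBlocks A B C D).det
        = (fromBlocks 1 0 X Y).det * (fromBlocks A B C D).det := by
          rw [det_fromBlocks_zero₁₂, det_one, one_mul]
    _ = (fromBlocks 1 0 X Y * fromBlocks A B C D).det := (det_mul _ _).symm
    _ = (fromBlocks A B (X * A + Y * C) (X * B + Y * D)).det := by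
          simp only [fromBlocks_multiply, Matrix.one_mul, Matrix.zero_mul, add_zero]

theorem block_det_identity_general
    (P1 : Matrix m m R) (P2 : Matrix m n R) (P3 : Matrix n m R) (P4 : Matrix n n R)
    (K1 : Matrix n m R) (K2 : Matrix n n R) (h : K1 * P1 + K2 * P3 = 0) :
    K2.det * (fromBlocks P1 P2 P3 P4).det = P1.det * (K1 * P2 + K2 * P4).det := by
  rw [det_mul_det_fromBlocks_eq_det_fromBlocks_add P1 P2 P3 P4 K1 K2, h, det_fromBlocks_zero₂₁]

end BlockDeterminant

/-- block triangularization determinant identity: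
if `K1·P1 + K2·P3 = 0`, then
`det(K2)·det([[P1,P2],[P3,P4]]) = det(P1)·det(K1·P2 + K2·P4)`. -/
theorem block_det_identity {K : Type*} [Field K] {k l : ℕ} (hk : 0 < k) (hl : 0 < l)
    (P1 : Matrix (Fin k) (Fin k) K[X]) (P2 : Matrix (Fin k) (Fin l) K[X])
    (P3 : Matrix (Fin l) (Fin k) K[X]) (P4 : Matrix (Fin l) (Fin l) K[X])
    (K1 : Matrix (Fin l) (Fin k) K[X]) (K2 : Matrix (Fin l) (Fin l) K[X])
    (h : K1 * P1 + K2 * P3 = 0) :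
    K2.det * (Matrix.fromBlocks P1 P2 P3 P4).det =
      P1.det * (K1 * P2 + K2 * P4).det :=
  block_det_identity_general P1 P2 P3 P4 K1 K2 h
end
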